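/- Every semi-equivelar map M of type {3^6} on the Klein bottle contains a cycle of type A. -/

import Mathlib

/-!
A combinatorial (flag) model of polyhedral maps on surfaces.

A map on a compact surface is encoded by its set of flags (incident
vertex-edge-face triples) together with three involutions `s0`, `s1`, `s2`,
changing respectively the vertex, the edge and the face of a flag.
Vertices, edges and faces of the map are the orbits of the pairs
`{s1, s2}`, `{s0, s2}` and `{s0, s1}` respectively.  For a map on a closed
surface all three involutions are fixed-point free; fixed points of `s2`
correspond to boundary flags of a surface with boundary.  By the
classification of compact surfaces, the underlying surface is the Klein
bottle if and only if the map is connected, closed, has Euler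
characteristic `0` and is non-orientable; a compact connected surface with
non-empty boundary and Euler characteristic `0` is a cylinder (annulus) if
it is orientable and a Möbius strip otherwise.
-/

/-- The raw data of a combinatorial map: a finite set of flags together with
three permutations (intended to be the three flag involutions). -/
structure PreMap where
  flag : Type
  fintype : Fintype flag
  s0 : Equiv.Perm flag
  s1 : Equiv.Perm flag
  s2 : Equiv.Perm flag

attribute [instance] PreMap.fintype

namespace PreMap

variable (M : PreMap)

/-- Generating relation for "the two flags belong to the same vertex". -/
def vRel : M.flag → M.flag → Prop := fun f g => g = M.s1 f ∨ g = M.s2 f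

/-- Generating relation for "the two flags belong to the same edge". -/
def eRel : M.flag → M.flag → Prop := fun f g => g = M.s0 f ∨ g = M.s2 f

/-- Generating relation for "the two flags belong to the same face". -/
def fRel : M.flag → M.flag → Prop := fun f g => g = M.s0 f ∨ g = M.s1 f

/-- The vertices of a map: orbits of flags under `⟨s1, s2⟩`. -/
def VertexOf : Type := Quot M.vRel

/-- The edges of a map: orbits of flags under `⟨s0, s2⟩`. -/
def EdgeOf : Type := Quot M.eRel

/-- The faces of a map: orbits of flags under `⟨s0, s1⟩`. -/
def FaceOf : Type := Quot M.fRel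

/-- The vertex a flag belongs to. -/
def vertexOfFlag (f : M.flag) : M.VertexOf := Quot.mk _ f

/-- The edge a flag belongs to. -/
def edgeOfFlag (f : M.flag) : M.EdgeOf := Quot.mk _ f

/-- The face a flag belongs to. -/
def faceOfFlag (f : M.flag) : M.FaceOf := Quot.mk _ f

/-- Two flags are incident to the same vertex. -/
def SameVertex (f g : M.flag) : Prop := M.vertexOfFlag f = M.vertexOfFlag g

/-- Two flags are incident to the same edge. -/
def SameEdge (f g : M.flag) : Prop := M.edgeOfFlag f = M.edgeOfFlag g

/-- Two flags are incident to the same face. -/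
def SameFace (f g : M.flag) : Prop := M.faceOfFlag f = M.faceOfFlag g

/-- The number of vertices of a map. -/
noncomputable def nV : ℕ := Nat.card M.VertexOf

/-- The number of edges of a map. -/
noncomputable def nE : ℕ := Nat.card M.EdgeOf

/-- The number of faces of a map. -/
noncomputable def nF : ℕ := Nat.card M.FaceOf

/-- The Euler characteristic `V - E + F` of a map. -/
noncomputable def euler : ℤ := (M.nV : ℤ) - (M.nE : ℤ) + (M.nF : ℤ)

/-- A map is connected if any two flags are joined by a chain of the three
involutions. -/
def Connected : Prop :=
  ∀ f g : M.flag, Relation.EqvGen (fun a b => b = M.s0 a ∨ b = M.s1 a ∨ b = M.s2 a) f g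

/-- A map is orientable if its flags can be properly `2`-coloured, the
colour being switched by each involution (boundary flags, i.e. fixed points
of `s2`, excepted). -/
def Orientable : Prop :=
  ∃ c : M.flag → Bool, (∀ f, c (M.s0 f) ≠ c f) ∧ (∀ f, c (M.s1 f) ≠ c f) ∧
    (∀ f, M.s2 f ≠ f → c (M.s2 f) ≠ c f)

/-- The axioms of a combinatorial map on a closed surface: the three
permutations are fixed-point-free involutions, `s0` and `s2` commute and
their product is fixed-point free, and the map is connected and nonempty. -/
def IsClosedSurfaceMap : Prop :=
  Nonempty M.flag ∧
  (∀ f, M.s0 (M.s0 f) = f) ∧ (∀ f, M.s1 (M.s1 f) = f) ∧ (∀ f, M.s2 (M.s2 f) = f) ∧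
  (∀ f, M.s0 f ≠ f) ∧ (∀ f, M.s1 f ≠ f) ∧ (∀ f, M.s2 f ≠ f) ∧
  (∀ f, M.s0 (M.s2 f) = M.s2 (M.s0 f)) ∧ (∀ f, M.s0 (M.s2 f) ≠ f) ∧
  M.Connected

/-- The axioms of a combinatorial map on a compact surface with (possibly
empty) boundary: fixed points of `s2` are the boundary flags. -/
def IsMapWithBoundary : Prop :=
  Nonempty M.flag ∧
  (∀ f, M.s0 (M.s0 f) = f) ∧ (∀ f, M.s1 (M.s1 f) = f) ∧ (∀ f, M.s2 (M.s2 f) = f) ∧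
  (∀ f, M.s0 f ≠ f) ∧ (∀ f, M.s1 f ≠ f) ∧
  (∀ f, M.s0 (M.s2 f) = M.s2 (M.s0 f)) ∧
  M.Connected

/-- Polyhedrality: faces are embedded closed `2`-cells (each vertex and each
edge occurs at most once on the boundary of a face) and the link of every
vertex is a cycle.  Within one face, two flags at the same vertex are equal or
`s1`-related, two flags on the same edge are equal or `s0`-related; around one
vertex two flags on the same edge are equal or `s2`-related. -/
def IsPolyhedral : Prop :=
  (∀ f g, M.SameFace f g → M.SameVertex f g → g = f ∨ g = M.s1 f) ∧
  (∀ f g, M.SameFace f g → M.SameEdge f g → g = f ∨ g = M.s0 f) ∧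
  (∀ f g, M.SameVertex f g → M.SameEdge f g → g = f ∨ g = M.s2 f)

/-- A polyhedral map on the Klein bottle: a connected closed polyhedral map
with Euler characteristic `0` on a non-orientable surface. -/
def IsKleinBottleMap : Prop :=
  M.IsClosedSurfaceMap ∧ M.IsPolyhedral ∧ M.euler = 0 ∧ ¬ M.Orientable

/-- The number of sides of the face containing a flag (a `d`-gon carries
`2 * d` flags). -/
noncomputable def faceDeg (f : M.flag) : ℕ := Nat.card {g : M.flag // M.SameFace f g} / 2

/-- The degree of the vertex containing a flag (a vertex of degree `q`
carries `2 * q` flags). -/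
noncomputable def vertexDeg (f : M.flag) : ℕ := Nat.card {g : M.flag // M.SameVertex f g} / 2

/-- `M.HasVertexType L` says that `M` is semi-equivelar with face sequence
`L`: reading the sizes of the faces in cyclic order around any vertex
(by iterating the corner rotation `s1 * s2` from a suitable starting flag at
that vertex) yields exactly the list `L`. -/
def HasVertexType (L : List ℕ) : Prop :=
  ∀ f : M.flag, ∃ g : M.flag, M.SameVertex f g ∧ M.vertexDeg g = L.length ∧
    ∀ i : Fin L.length, M.faceDeg (((M.s1 * M.s2) ^ (i : ℕ)) g) = L.get i

end PreMap

/-- Isomorphism of maps: a bijection of flags commuting with the three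
involutions (this is the combinatorial counterpart of a homeomorphism of the
surface sending vertices to vertices, edges to edges and faces to faces and
preserving incidences). -/
def MapIso (M N : PreMap) : Prop :=
  ∃ e : M.flag ≃ N.flag,
    (∀ f, e (M.s0 f) = N.s0 (e f)) ∧ (∀ f, e (M.s1 f) = N.s1 (e f)) ∧
    (∀ f, e (M.s2 f) = N.s2 (e f))

/-- The semi-equivelar maps of vertex type `L` with `n` vertices on the Klein
bottle. -/
def SEKMap (L : List ℕ) (n : ℕ) : Type 1 :=
  {M : PreMap // M.IsKleinBottleMap ∧ M.HasVertexType L ∧ M.nV = n}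

/-- `iKlein L n`: the number of isomorphism classes of semi-equivelar maps of
vertex type `L` on the Klein bottle with `n` vertices. -/
noncomputable def iKlein (L : List ℕ) (n : ℕ) : ℕ :=
  Nat.card (Quot (fun M N : SEKMap L n => MapIso M.1 N.1))

/-! ### Submaps, cylinders and Möbius strips -/

open Classical in
/-- The involution `σ` adjusted to a set `S`: it agrees with `σ` on the pairs
`{x, σ x}` that do not cross the boundary of `S`, and fixes the crossing
elements.  This restricts to `S` and to its complement. -/
noncomputable def adjustInvol {α : Type} (σ : Equiv.Perm α) (S : Set α)
    (h : ∀ x, σ (σ x) = x) : Equiv.Perm α :=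
  Function.Involutive.toPerm (fun x => if x ∈ S ↔ σ x ∈ S then σ x else x)
    (by
      intro x
      by_cases hx : x ∈ S ↔ σ x ∈ S
      · have hσx : σ x ∈ S ↔ σ (σ x) ∈ S := by rw [h x]; exact hx.symm
        simp only [if_pos hx, h x, if_pos (Iff.symm hx)]
      · simp only [if_neg hx])

open Classical in
theorem adjustInvol_mem {α : Type} (σ : Equiv.Perm α) (S : Set α)
    (h : ∀ x, σ (σ x) = x) : ∀ x, x ∈ S ↔ adjustInvol σ S h x ∈ S := by
  intro x
  have hx' : adjustInvol σ S h x = if x ∈ S ↔ σ x ∈ S then σ x else x := rfl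
  rw [hx']
  by_cases hx : x ∈ S ↔ σ x ∈ S
  · simp only [if_pos hx]; exact hx
  · simp only [if_neg hx]

open Classical in
/-- Restriction of an involution `σ` to a subset `S`, fixing the flags whose
`σ`-image leaves `S` (these become boundary flags). -/
noncomputable def restrictInvol {α : Type} (σ : Equiv.Perm α) (S : Set α) :
    Equiv.Perm S :=
  if h : ∀ x, σ (σ x) = x then
    Equiv.Perm.subtypePerm (adjustInvol σ S h) (fun x => (adjustInvol_mem σ S h x).symm)
  else 1

namespace PreMap

/-- The submap of `M` carried by a set `S` of flags (intended: `S` a union of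
closed faces).  Flags whose `s2`-image leaves `S` become boundary flags. -/
noncomputable def subMap (M : PreMap) (S : Set M.flag) : PreMap where
  flag := S
  fintype := (Set.toFinite S).fintype
  s0 := restrictInvol M.s0 S
  s1 := restrictInvol M.s1 S
  s2 := restrictInvol M.s2 S

/-- A combinatorial cylinder (annulus): a compact connected orientable map
with non-empty boundary and Euler characteristic `0`. -/
def IsCylinder (N : PreMap) : Prop :=
  N.IsMapWithBoundary ∧ N.Orientable ∧ N.euler = 0 ∧ ∃ f, N.s2 f = f

/-- A combinatorial Möbius strip: a compact connected non-orientable map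
with non-empty boundary and Euler characteristic `0`. -/
def IsMobius (N : PreMap) : Prop :=
  N.IsMapWithBoundary ∧ ¬ N.Orientable ∧ N.euler = 0 ∧ ∃ f, N.s2 f = f

/-- The number of boundary vertices of a map with boundary. -/
noncomputable def nBdryV (N : PreMap) : ℕ :=
  Nat.card {v : N.VertexOf // ∃ f : N.flag, N.s2 f = f ∧ N.vertexOfFlag f = v}

/-- One step of the straight-ahead walk in a `{3^6}` map: rotate three
corners around the vertex (to the opposite edge), then cross it.  Paths of
type `A` are the orbits of this permutation. -/
def stepA (M : PreMap) : Equiv.Perm M.flag := (M.s1 * M.s2) ^ 3 * M.s0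

/-- One step of the straight-ahead walk in a `{4^4}` map.  Paths of type `B`
are the orbits of this permutation. -/
def stepB (M : PreMap) : Equiv.Perm M.flag := (M.s1 * M.s2) ^ 2 * M.s0

/-- `M.IsCycleTypeA k f`: the straight-ahead (type `A`) walk starting at the
flag `f` in a `{3^6}` map closes up after `k` steps (possibly with a twist)
and visits `k` pairwise distinct vertices, i.e. it is a cycle of type `A` of
length `k`. -/
def IsCycleTypeA (M : PreMap) (k : ℕ) (f : M.flag) : Prop :=
  1 ≤ k ∧ ((M.stepA ^ k) f = f ∨ (M.stepA ^ k) f = M.s2 f) ∧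
  ∀ i j : Fin k, M.SameVertex ((M.stepA ^ (i : ℕ)) f) ((M.stepA ^ (j : ℕ)) f) → i = j

/-- A cycle of type `B` in a `{4^4}` map; see `IsCycleTypeA`. -/
def IsCycleTypeB (M : PreMap) (k : ℕ) (f : M.flag) : Prop :=
  1 ≤ k ∧ ((M.stepB ^ k) f = f ∨ (M.stepB ^ k) f = M.s2 f) ∧
  ∀ i j : Fin k, M.SameVertex ((M.stepB ^ (i : ℕ)) f) ((M.stepB ^ (j : ℕ)) f) → i = j

/-- Two vertices of a map joined by an edge. -/
def AdjV (M : PreMap) (v w : M.VertexOf) : Prop :=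
  ∃ f : M.flag, M.vertexOfFlag f = v ∧ M.vertexOfFlag (M.s0 f) = w

end PreMap

/-- The generating relation of the Klein-bottle lattice identifications with
parameters `r`, `s`, `k`: horizontal period `r`, and vertical gluing
`(x, y) ↦ (k - x, y + s)` (a shift by `k` together with a reversal of the
horizontal orientation). -/
def kleinShift (r s k : ℤ) (p q : ℤ × ℤ) : Prop :=
  q = (p.1 + r, p.2) ∨ q = (k - p.1, p.2 + s)

namespace PreMap

/-- `M.IsPlanarKRep r s k`: the map `M` admits a planar polyhedral
`(r, s, k)`-representation `K(r, s, k)`, bounded by two identical cycles with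
opposite orientations: there is a system of `s` distinguished horizontal rows
of `r` vertices each, indexed by the plane lattice modulo the Klein-bottle
identifications `kleinShift r s k`, each row being a cycle and consecutive
rows being joined by an edge. -/
def IsPlanarKRep (M : PreMap) (r s k : ℕ) : Prop :=
  ∃ ℓ : ℤ × ℤ → M.VertexOf,
    (∀ p q : ℤ × ℤ, Relation.EqvGen (kleinShift (r : ℤ) (s : ℤ) (k : ℤ)) p q ↔ ℓ p = ℓ q) ∧
    (∀ x y : ℤ, M.AdjV (ℓ (x, y)) (ℓ (x + 1, y))) ∧
    (∀ y : ℤ, ∃ x x' : ℤ, M.AdjV (ℓ (x, y)) (ℓ (x', y + 1)))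

/-- `M.IsMobiusKRep r s`: the map `M` admits a representation `K(r, s)`
bounded by two Möbius strips: it decomposes into a cylinder containing `s`
distinguished cycles of length `r` and two Möbius strips whose boundary
cycles (of length `r`) are the two boundary cycles of the cylinder. -/
def IsMobiusKRep (M : PreMap) (r s : ℕ) : Prop :=
  ∃ S S' S'' : Set M.flag,
    (∀ g, g ∈ S ∨ g ∈ S' ∨ g ∈ S'') ∧
    Disjoint S S' ∧ Disjoint S S'' ∧ Disjoint S' S'' ∧
    (M.subMap S).IsCylinder ∧ (M.subMap S').IsMobius ∧ (M.subMap S'').IsMobius ∧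
    (M.subMap S').nBdryV = r ∧ (M.subMap S'').nBdryV = r ∧
    (M.subMap S).nV = r * s

/-- `M.HasRSK36 r s k`: a `(r, s, k)`-representation `K(r, s, k)` of a map of
type `{3^6}`: the vertices are exactly the plane lattice modulo the
Klein-bottle identifications `kleinShift r s k`, the horizontal rows are
cycles of type `A` of length `r` and the lattice adjacencies are edges. -/
def HasRSK36 (M : PreMap) (r s k : ℕ) : Prop :=
  ∃ ℓ : ℤ × ℤ → M.VertexOf,
    Function.Surjective ℓ ∧
    (∀ p q : ℤ × ℤ, Relation.EqvGen (kleinShift (r : ℤ) (s : ℤ) (k : ℤ)) p q ↔ ℓ p = ℓ q) ∧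
    (∀ x y : ℤ, M.AdjV (ℓ (x, y)) (ℓ (x + 1, y)) ∧ M.AdjV (ℓ (x, y)) (ℓ (x, y + 1))) ∧
    (∀ y : ℤ, ∃ f : M.flag, M.IsCycleTypeA r f ∧
      ∀ i : Fin r, ∃ x : ℤ, M.vertexOfFlag ((M.stepA ^ (i : ℕ)) f) = ℓ (x, y))

/-- `M.HasRSK44 r s k`: a `(r, s, k)`-representation of a map of type
`{4^4}`; as `HasRSK36`, with rows the cycles of type `B`. -/
def HasRSK44 (M : PreMap) (r s k : ℕ) : Prop :=
  ∃ ℓ : ℤ × ℤ → M.VertexOf,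
    Function.Surjective ℓ ∧
    (∀ p q : ℤ × ℤ, Relation.EqvGen (kleinShift (r : ℤ) (s : ℤ) (k : ℤ)) p q ↔ ℓ p = ℓ q) ∧
    (∀ x y : ℤ, M.AdjV (ℓ (x, y)) (ℓ (x + 1, y)) ∧ M.AdjV (ℓ (x, y)) (ℓ (x, y + 1))) ∧
    (∀ y : ℤ, ∃ f : M.flag, M.IsCycleTypeB r f ∧
      ∀ i : Fin r, ∃ x : ℤ, M.vertexOfFlag ((M.stepB ^ (i : ℕ)) f) = ℓ (x, y))

/-- `M.HasKLT36 l t`: a representation `K(S'(M), 𝓜', 𝓜'') = K(l, t)` of a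
map of type `{3^6}`: a decomposition into a cylinder and two Möbius strips
whose boundary cycles are cycles of type `A` of length `l`, the cylinder
containing `t` such cycles (so that `n = l * t`). -/
def HasKLT36 (M : PreMap) (l t : ℕ) : Prop :=
  ∃ (S S' S'' : Set M.flag) (f f' : M.flag),
    (∀ g, g ∈ S ∨ g ∈ S' ∨ g ∈ S'') ∧
    Disjoint S S' ∧ Disjoint S S'' ∧ Disjoint S' S'' ∧
    (M.subMap S).IsCylinder ∧ (M.subMap S').IsMobius ∧ (M.subMap S'').IsMobius ∧
    M.IsCycleTypeA l f ∧ M.IsCycleTypeA l f' ∧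
    (∀ g ∈ S', M.s2 g ∉ S' → ∃ i < l, M.SameVertex g ((M.stepA ^ i) f)) ∧
    (∀ g ∈ S'', M.s2 g ∉ S'' → ∃ i < l, M.SameVertex g ((M.stepA ^ i) f')) ∧
    M.nV = l * t

end PreMap

/-- The eleven semi-equivelar vertex types on the torus and Klein bottle. -/
def elevenTypes : List (List ℕ) :=
  [[3, 3, 3, 3, 3, 3], [4, 4, 4, 4], [6, 6, 6], [3, 3, 3, 4, 4], [3, 3, 4, 3, 4],
   [3, 6, 3, 6], [3, 3, 3, 3, 6], [4, 8, 8], [3, 12, 12], [4, 6, 12], [3, 4, 6, 4]]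

set_option linter.unusedSectionVars false
/-! ### Algebra of the triangle group -/

/-- The relations of the `[3,6]` Coxeter group. -/
structure KRel {G : Type} [Group G] (a b c : G) : Prop where
  ha : a * a = 1
  hb : b * b = 1
  hc : c * c = 1
  hac : a * c = c * a
  h3 : (a * b) ^ 3 = 1
  hr : (b * c) ^ 6 = 1

/-- the translation -/
def kT {G : Type} [Group G] (a b c : G) : G := c * ((b * c) ^ 3 * a)

/-- the rotated translation -/
def kU {G : Type} [Group G] (a b c : G) : G := (b * c) * kT a b c * (b * c)⁻¹

/-- general translation -/
def kV {G : Type} [Group G] (a b c : G) (x y : ℤ) : G := kT a b c ^ x * kU a b c ^ y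

namespace KRel
variable {G : Type} [Group G] {a b c : G} (h : KRel a b c)
include h

theorem ia : a⁻¹ = a := inv_eq_of_mul_eq_one_left h.ha
theorem ib : b⁻¹ = b := inv_eq_of_mul_eq_one_left h.hb
theorem ic : c⁻¹ = c := inv_eq_of_mul_eq_one_left h.hc

theorem cr : c * (b * c) = (b * c)⁻¹ * c := by
  rw [mul_inv_rev, h.ib, h.ic, mul_assoc]

theorem crz (j : ℤ) : c * (b * c) ^ j = (b * c) ^ (-j) * c := by
  have h : SemiconjBy c (b * c) (b * c)⁻¹ := h.cr
  have := h.zpow_right j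
  rw [inv_zpow'] at this
  exact this

theorem r6z : (b * c) ^ (6 : ℤ) = 1 := by exact_mod_cast h.hr

theorem rmod (j k : ℤ) : (b * c) ^ (j + 6 * k) = (b * c) ^ j := by
  rw [zpow_add, zpow_mul, h.r6z, one_zpow, mul_one]

theorem r33 : (b * c) ^ 3 * (b * c) ^ 3 = 1 := by rw [← pow_add]; exact h.hr

theorem ir3 : ((b * c) ^ 3)⁻¹ = (b * c) ^ 3 := inv_eq_of_mul_eq_one_left h.r33

theorem cr3 : c * (b * c) ^ 3 = (b * c) ^ 3 * c := by
  have := h.crz 3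
  rw [← h.rmod (-3) 1, (by norm_num : (-3 : ℤ) + 6 * 1 = 3)] at this
  exact_mod_cast this

theorem T' : kT a b c = (b * c) ^ 3 * (c * a) := by
  unfold kT; rw [← mul_assoc, h.cr3, mul_assoc]

theorem iT : (kT a b c)⁻¹ = a * (b * c) ^ 3 * c := by
  unfold kT; rw [mul_inv_rev, mul_inv_rev, h.ia, h.ic, h.ir3]

theorem cT : c * kT a b c = kT a b c * c := by
  nth_rw 1 [h.T']
  rw [kT, ← mul_assoc c ((b * c) ^ 3) (c * a), h.cr3, ← mul_assoc c ((b * c) ^ 3) a, h.cr3]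
  simp only [mul_assoc]
  rw [h.hac]

theorem aeq : a = (kT a b c)⁻¹ * (b * c) ^ 3 * c := by
  rw [h.iT]
  simp only [mul_assoc]
  rw [← mul_assoc c, h.cr3, mul_assoc, h.hc, mul_one, h.r33, mul_one]

theorem beq : b = (b * c) * c := by rw [mul_assoc, h.hc, mul_one]

theorem r3T : (b * c) ^ 3 * kT a b c = (kT a b c)⁻¹ * (b * c) ^ 3 := by
  rw [h.T', ← mul_assoc, h.r33, ← h.T', h.iT]
  rw [mul_assoc _ c, h.cr3, mul_assoc a, ← mul_assoc ((b * c) ^ 3), h.r33, one_mul, one_mul, h.hac]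

theorem braid : a * b * a = b * a * b := by
  have : (a * b * a) * (b * a * b) = 1 := by
    rw [← h.h3]; simp only [pow_succ, pow_zero, one_mul, mul_assoc]
  rw [eq_inv_of_mul_eq_one_left this]
  simp only [mul_inv_rev, h.ia, h.ib, mul_assoc]

theorem r5 : (b * c) ^ 2 * (b * c) ^ 3 = c * b := by
  have h1 : (b * c)⁻¹ = (b * c) ^ 2 * (b * c) ^ 3 := by
    rw [← pow_add]; apply inv_eq_of_mul_eq_one_left; rw [← pow_succ]; exact h.hr
  rw [← h1, mul_inv_rev, h.ib, h.ic]

theorem key : kT a b c * (b * c) ^ 2 * kT a b c = (b * c) * kT a b c * (b * c) := by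
  have hcomm : (b * c) * (b * c) ^ 3 = (b * c) ^ 3 * (b * c) := by
    rw [← pow_succ', ← pow_succ]
  have h1 : kT a b c * (b * c) ^ 2 * kT a b c = (b * c) ^ 3 * (c * a * (c * b) * (c * a)) := by
    rw [h.T', ← h.r5]; simp only [mul_assoc]
  have h2 : (b * c) * kT a b c * (b * c) = (b * c) ^ 3 * (b * (c * c) * a * (b * c)) := by
    rw [h.T', ← mul_assoc (b * c) ((b * c) ^ 3), hcomm]; simp only [mul_assoc]
  rw [h1, h2, h.hc, mul_one, ← h.hac]
  have h3 : a * c * (c * b) * (a * c) = a * (c * c) * b * a * c := by simp only [mul_assoc]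
  rw [h3, h.hc, mul_one, h.braid]
  simp only [mul_assoc]

theorem rT : (b * c) * kT a b c = kU a b c * (b * c) := by
  unfold kU; group

theorem rU0 : (b * c) * kU a b c = (kT a b c)⁻¹ * kU a b c * (b * c) := by
  have := h.key
  unfold kU
  generalize b * c = r at *
  generalize kT a b c = T at *
  have e : T⁻¹ * (r * T * r⁻¹) * r = T⁻¹ * (r * T * r) * r⁻¹ := by group
  rw [e, ← this, pow_two]
  simp only [mul_assoc, inv_mul_cancel_left]

theorem TU : Commute (kT a b c) (kU a b c) := by
  -- `T₂ = T⁻¹ U`, conjugating once more `T₃ = U⁻¹ T₂ = T⁻¹`.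
  set T := kT a b c
  set U := kU a b c
  set r := b * c
  have e1 : r * T * r⁻¹ = U := rfl
  have e2 : r * U * r⁻¹ = T⁻¹ * U := by rw [mul_inv_eq_iff_eq_mul]; exact h.rU0
  have e3 : r * (T⁻¹ * U) * r⁻¹ = U⁻¹ * (T⁻¹ * U) := by
    nth_rw 2 [← e2]; rw [← e1]; group
  have e4 : r * (T⁻¹ * U) * r⁻¹ = T⁻¹ := by
    rw [← e2, ← e1]
    have : r * (r * (r * T * r⁻¹) * r⁻¹) * r⁻¹ = (r ^ 3 * T) * (r ^ 3)⁻¹ := by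
      simp only [pow_succ, pow_zero, one_mul, mul_assoc, mul_inv_rev]
    rw [this, h.r3T, mul_inv_cancel_right]
  rw [e3, inv_mul_eq_iff_eq_mul] at e4
  have : U * T = T * U := by
    have := congrArg (fun z => T * z * T) e4
    simpa [mul_assoc] using this
  exact this.symm

theorem Vadd (x y z w : ℤ) : kV a b c x y * kV a b c z w = kV a b c (x + z) (y + w) := by
  unfold kV
  rw [zpow_add, zpow_add, mul_assoc, ← mul_assoc (_ ^ y), ((h.TU.zpow_zpow z y).eq).symm]
  simp only [mul_assoc]

theorem Vinv (x y : ℤ) : (kV a b c x y)⁻¹ = kV a b c (-x) (-y) := by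
  apply inv_eq_of_mul_eq_one_left
  rw [h.Vadd]; simp [kV]

theorem rV (x y : ℤ) : (b * c) * kV a b c x y = kV a b c (-y) (x + y) * (b * c) := by
  have h1 : SemiconjBy (b * c) (kT a b c) (kU a b c) := h.rT
  have h2 : SemiconjBy (b * c) (kU a b c) ((kT a b c)⁻¹ * kU a b c) := h.rU0
  have := (h1.zpow_right x).mul_right (h2.zpow_right y)
  have e := this.eq
  rw [(h.TU.inv_left).mul_zpow] at e
  unfold kV
  rw [e, inv_zpow', ← mul_assoc (kU a b c ^ x), ((h.TU.zpow_zpow (-y) x).eq).symm, zpow_add]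
  simp only [mul_assoc]

theorem cV (x y : ℤ) : c * kV a b c x y = kV a b c (x + y) (-y) * c := by
  have h1 : SemiconjBy c (kT a b c) (kT a b c) := h.cT
  have h0 : (b * c)⁻¹ * kT a b c = kT a b c * (kU a b c)⁻¹ * (b * c)⁻¹ := by
    have := h.rV 1 (-1)
    simp [kV] at this
    rw [inv_mul_eq_iff_eq_mul, ← mul_assoc, this, mul_inv_cancel_right]
  have h2 : SemiconjBy c (kU a b c) (kT a b c * (kU a b c)⁻¹) := by
    show c * kU a b c = _
    have := h.crz (-1)
    simp only [zpow_neg, zpow_one, inv_inv] at this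
    have e : c * kU a b c = c * (b * c) * kT a b c * (b * c)⁻¹ := by
      unfold kU; simp only [mul_assoc]
    rw [e, h.cr, mul_assoc _ c, h.cT, ← mul_assoc, h0, mul_assoc _ c, this, ← mul_assoc,
      inv_mul_cancel_right]
  have e := ((h1.zpow_right x).mul_right (h2.zpow_right y)).eq
  rw [(h.TU.inv_right).mul_zpow] at e
  unfold kV
  rw [e, inv_zpow', ← mul_assoc, zpow_add]

theorem rzV (j : ℤ) : ∀ x y : ℤ, ∃ z w : ℤ,
    (b * c) ^ j * kV a b c x y = kV a b c z w * (b * c) ^ j := by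
  induction j with
  | zero => intro x y; exact ⟨x, y, by simp⟩
  | succ n ih =>
    intro x y
    obtain ⟨z, w, e⟩ := ih (-y) (x + y)
    refine ⟨z, w, ?_⟩
    rw [zpow_add_one, mul_assoc, h.rV, ← mul_assoc, e, mul_assoc]
  | pred n ih =>
    intro x y
    obtain ⟨z, w, e⟩ := ih (x + y) (-x)
    refine ⟨z, w, ?_⟩
    have := h.rV (x + y) (-x)
    rw [zpow_sub_one, mul_assoc]
    have e2 : (b * c)⁻¹ * kV a b c x y = kV a b c (x + y) (-x) * (b * c)⁻¹ := by
      rw [inv_mul_eq_iff_eq_mul, ← mul_assoc, this, mul_inv_cancel_right]; simp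
    rw [e2, ← mul_assoc, e, mul_assoc]
end KRel

/-- orientation-preserving element with rotation part `j` -/
def kLin {G : Type} [Group G] (a b c : G) (x : G) (j : ℤ) : Prop :=
  ∃ p q : ℤ, x = kV a b c p q * (b * c) ^ j

/-- orientation-reversing element with linear part `r^j c` -/
def kRef {G : Type} [Group G] (a b c : G) (x : G) (j : ℤ) : Prop :=
  ∃ p q : ℤ, x = kV a b c p q * (b * c) ^ j * c

namespace KRel
variable {G : Type} [Group G] {a b c : G} (h : KRel a b c)
include h

theorem ll {x y : G} {j k : ℤ} (hx : kLin a b c x j) (hy : kLin a b c y k) :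
    kLin a b c (x * y) (j + k) := by
  obtain ⟨p, q, rfl⟩ := hx
  obtain ⟨p', q', rfl⟩ := hy
  obtain ⟨z, w, e⟩ := h.rzV j p' q'
  refine ⟨p + z, q + w, ?_⟩
  rw [← h.Vadd, zpow_add, mul_assoc, ← mul_assoc (_ ^ j), e]
  simp only [mul_assoc]

theorem refl_iff {x : G} {j : ℤ} : kRef a b c x j ↔ kLin a b c (x * c) j := by
  constructor
  · rintro ⟨p, q, rfl⟩; exact ⟨p, q, by rw [mul_assoc _ c c, h.hc, mul_one]⟩
  · rintro ⟨p, q, e⟩; exact ⟨p, q, by rw [← e, mul_assoc, h.hc, mul_one]⟩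

theorem clc {x : G} {j : ℤ} (hx : kLin a b c x j) : kLin a b c (c * x * c) (-j) := by
  obtain ⟨p, q, rfl⟩ := hx
  refine ⟨p + q, -q, ?_⟩
  rw [← mul_assoc c, h.cV, mul_assoc _ c, h.crz]
  simp only [mul_assoc]
  rw [h.hc, mul_one]

theorem lr {x y : G} {j k : ℤ} (hx : kLin a b c x j) (hy : kRef a b c y k) :
    kRef a b c (x * y) (j + k) := by
  rw [h.refl_iff] at *
  rw [mul_assoc]; exact h.ll hx hy

theorem rl {x y : G} {j k : ℤ} (hx : kRef a b c x j) (hy : kLin a b c y k) :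
    kRef a b c (x * y) (j - k) := by
  rw [h.refl_iff] at *
  have := h.ll hx (h.clc hy)
  have e : x * c * (c * y * c) = x * (c * c) * y * c := by simp only [mul_assoc]
  rw [e, h.hc, mul_one] at this
  exact this

theorem rr {x y : G} {j k : ℤ} (hx : kRef a b c x j) (hy : kRef a b c y k) :
    kLin a b c (x * y) (j - k) := by
  rw [h.refl_iff] at *
  have := h.ll hx (h.clc hy)
  have e : x * c * (c * (y * c) * c) = x * (c * c) * y * (c * c) := by simp only [mul_assoc]
  rw [e, h.hc, mul_one, mul_one] at this
  exact this

theorem linr (j : ℤ) : kLin a b c ((b * c) ^ j) j := ⟨0, 0, by simp [kV]⟩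
theorem linT (j : ℤ) : kLin a b c (kT a b c ^ j) 0 := ⟨j, 0, by simp [kV]⟩
theorem refc : kRef a b c c 0 := ⟨0, 0, by simp [kV]⟩
theorem refb : kRef a b c b 1 := ⟨0, 0, by simpa [kV] using h.beq⟩
theorem refa : kRef a b c a 3 := ⟨-1, 0, by
  have := h.aeq
  simpa [kV] using this⟩

theorem linv {x : G} {j : ℤ} (hx : kLin a b c x j) : kLin a b c x⁻¹ (-j) := by
  obtain ⟨p, q, rfl⟩ := hx
  rw [mul_inv_rev, h.Vinv, ← zpow_neg]
  have := h.ll (h.linr (-j)) ⟨-p, -q, (by simp : kV a b c (-p) (-q) = kV a b c (-p) (-q) * (b * c) ^ (0:ℤ))⟩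
  simpa using this
end KRel

theorem kConj {α : Type} {x y g : Equiv.Perm α} (e : g * x * g⁻¹ = y) (hy : ∀ f, y f ≠ f) :
    ∀ f, x f ≠ f := by
  intro f hf
  apply hy (g f)
  rw [← e]
  simp [hf]

namespace KRel
variable {α : Type} {a b c : Equiv.Perm α} (h : KRel a b c)
include h

theorem r2V (x y : ℤ) :
    (b * c) ^ (2 : ℤ) * kV a b c x y = kV a b c (-x - y) x * (b * c) ^ (2 : ℤ) := by
  have e : (b * c) ^ (2 : ℤ) = (b * c) * (b * c) := by
    rw [zpow_ofNat, pow_two]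
  rw [e, mul_assoc (b * c), h.rV, ← mul_assoc, h.rV, mul_assoc]
  congr 2 <;> ring_nf

theorem r3V (x y : ℤ) :
    (b * c) ^ (3 : ℤ) * kV a b c x y = kV a b c (-x) (-y) * (b * c) ^ (3 : ℤ) := by
  have e : (b * c) ^ (3 : ℤ) = (b * c) * (b * c) ^ (2 : ℤ) := by
    rw [zpow_ofNat, zpow_ofNat, pow_succ']
  rw [e, mul_assoc (b * c), h.r2V, ← mul_assoc, h.rV, mul_assoc]
  congr 2; ring_nf

theorem linmod {x : Equiv.Perm α} {j : ℤ} (hx : kLin a b c x j) (k : ℤ) :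
    kLin a b c x (j + 6 * k) := by
  obtain ⟨p, q, e⟩ := hx
  exact ⟨p, q, by rw [h.rmod]; exact e⟩

theorem noFix2 (n2 : ∀ f, ((b * c) ^ 2) f ≠ f) (nab : ∀ f, (a * b) f ≠ f)
    {x : Equiv.Perm α} (hx : kLin a b c x 2) : ∀ f, x f ≠ f := by
  obtain ⟨p, q, rfl⟩ := hx
  have cj : ∀ s t : ℤ, kV a b c s t * (kV a b c p q * (b * c) ^ (2 : ℤ)) * (kV a b c s t)⁻¹
      = kV a b c (p + 2 * s + t) (q + t - s) * (b * c) ^ (2 : ℤ) := by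
    intro s t
    rw [h.Vinv, mul_assoc, mul_assoc (kV a b c p q), h.r2V, ← mul_assoc, ← mul_assoc, h.Vadd,
      h.Vadd]
    congr 2 <;> ring
  have k1 : ∀ f, (kV a b c (-1) 0 * (b * c) ^ (2 : ℤ)) f ≠ f := by
    have e : kV a b c (-1) 0 * (b * c) ^ (2 : ℤ) = a * b := by
      have e1 : kV a b c (-1) 0 = (kT a b c)⁻¹ := by simp [kV]
      have e2 : (b * c) ^ (2 : ℤ) = (b * c) ^ 2 := by rw [zpow_ofNat]
      rw [e1, e2, h.iT]
      have h5 : (b * c) ^ 3 * (b * c) ^ 2 = c * b := by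
        rw [← h.r5, ← pow_add, ← pow_add]
      have : c * (b * c) ^ 2 = (b * c) ^ 2 * (b * c) ^ 2 * c := by
        have := h.crz 2
        rw [← h.rmod (-2) 1, (by norm_num : (-2 : ℤ) + 6 * 1 = 4), zpow_ofNat, zpow_ofNat] at this
        rw [this, ← pow_add]
      rw [mul_assoc, this, ← mul_assoc, ← mul_assoc, mul_assoc a, h5, mul_assoc a, mul_assoc a]
      congr 1
      calc c * b * (b * c) ^ 2 * c = c * (b * b) * c * b * (c * c) := by
            rw [pow_two]; simp only [mul_assoc]
        _ = b := by rw [h.hb, h.hc, mul_one, mul_one, h.hc, one_mul]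
    rw [e]; exact nab
  have k2 : ∀ f, (kV a b c 1 0 * (b * c) ^ (2 : ℤ)) f ≠ f := by
    have e : (c * (b * c) ^ 2) * (kV a b c 1 0 * (b * c) ^ (2 : ℤ)) * (c * (b * c) ^ 2)⁻¹
        = (a * b)⁻¹ := by
      have e1 : kV a b c 1 0 = kT a b c := by simp [kV]
      have e2 : (b * c) ^ (2 : ℤ) = (b * c) ^ 2 := by rw [zpow_ofNat]
      rw [e1, e2, h.T', mul_inv_eq_iff_eq_mul]
      have : c * (b * c) ^ 2 * ((b * c) ^ 3 * (c * a) * (b * c) ^ 2)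
        = c * ((b * c) ^ 2 * (b * c) ^ 3) * (c * a) * (b * c) ^ 2 := by simp only [mul_assoc]
      rw [this, h.r5, mul_inv_rev, h.ia, h.ib, ← h.hac]
      calc c * (c * b) * (a * c) * (b * c) ^ 2 = (c * c) * b * (a * c) * (b * c) ^ 2 := by
            simp only [mul_assoc]
        _ = _ := by rw [h.hc, one_mul]; simp only [mul_assoc]
    refine kConj e ?_
    intro f hf
    apply nab f
    rw [Equiv.Perm.inv_eq_iff_eq] at hf
    exact hf.symm
  have k0 : ∀ f, (kV a b c 0 0 * (b * c) ^ (2 : ℤ)) f ≠ f := by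
    have e : kV a b c 0 0 * (b * c) ^ (2 : ℤ) = (b * c) ^ 2 := by simp [kV, zpow_ofNat]
    rw [e]; exact n2
  obtain ⟨s, hs⟩ : ∃ s : ℤ, p - q + 3 * s = 0 ∨ p - q + 3 * s = 1 ∨ p - q + 3 * s = -1 :=
    ⟨-((p - q + 1) / 3), by omega⟩
  have := cj s (s - q)
  have e1 : p + 2 * s + (s - q) = p - q + 3 * s := by ring
  have e2 : q + (s - q) - s = 0 := by ring
  rw [e1, e2] at this
  rcases hs with hs | hs | hs <;> rw [hs] at this
  · exact kConj this k0
  · exact kConj this k2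
  · exact kConj this k1

theorem noFix3 (n3 : ∀ f, ((b * c) ^ 3) f ≠ f) (nac : ∀ f, (a * c) f ≠ f)
    {x : Equiv.Perm α} (hx : kLin a b c x 3) : ∀ f, x f ≠ f := by
  obtain ⟨p, q, rfl⟩ := hx
  have cj : ∀ s t : ℤ, kV a b c s t * (kV a b c p q * (b * c) ^ (3 : ℤ)) * (kV a b c s t)⁻¹
      = kV a b c (p + 2 * s) (q + 2 * t) * (b * c) ^ (3 : ℤ) := by
    intro s t
    rw [h.Vinv, mul_assoc, mul_assoc (kV a b c p q), h.r3V, ← mul_assoc, ← mul_assoc, h.Vadd,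
      h.Vadd]
    congr 2 <;> ring
  have rot : ∀ x y : ℤ, (b * c) * (kV a b c x y * (b * c) ^ (3 : ℤ)) * (b * c)⁻¹
      = kV a b c (-y) (x + y) * (b * c) ^ (3 : ℤ) := by
    intro x y
    rw [← mul_assoc, h.rV]
    generalize b * c = r
    group
  have k00 : ∀ f, (kV a b c 0 0 * (b * c) ^ (3 : ℤ)) f ≠ f := by
    have e : kV a b c 0 0 * (b * c) ^ (3 : ℤ) = (b * c) ^ 3 := by simp [kV, zpow_ofNat]
    rw [e]; exact n3
  have k10 : ∀ f, (kV a b c 1 0 * (b * c) ^ (3 : ℤ)) f ≠ f := by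
    have e : (b * c) ^ 3 * (kV a b c 1 0 * (b * c) ^ (3 : ℤ)) * ((b * c) ^ 3)⁻¹ = a * c := by
      have e1 : kV a b c 1 0 = kT a b c := by simp [kV]
      have e2 : (b * c) ^ (3 : ℤ) = (b * c) ^ 3 := by rw [zpow_ofNat]
      rw [e1, e2, ← mul_assoc, mul_inv_cancel_right, h.T', ← mul_assoc, h.r33, one_mul, h.hac]
    exact kConj e nac
  have k1m : ∀ f, (kV a b c 1 (-1) * (b * c) ^ (3 : ℤ)) f ≠ f :=
    kConj (rot 1 (-1)) (by norm_num; simpa using k10)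
  have k0m : ∀ f, (kV a b c 0 (-1) * (b * c) ^ (3 : ℤ)) f ≠ f :=
    kConj (rot 0 (-1)) (by norm_num; simpa using k1m)
  have hp : p % 2 = 0 ∨ p % 2 = 1 := by omega
  have hq : q % 2 = 0 ∨ q % 2 = 1 := by omega
  rcases hp with hp | hp <;> rcases hq with hq | hq
  · refine kConj ((cj (-(p / 2)) (-(q / 2))).trans ?_) k00
    congr 2 <;> omega
  · refine kConj ((cj (-(p / 2)) (-(q / 2) - 1)).trans ?_) k0m
    congr 2 <;> omega
  · refine kConj ((cj (-(p / 2)) (-(q / 2))).trans ?_) k10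
    congr 2 <;> omega
  · refine kConj ((cj (-(p / 2)) (-(q / 2) - 1)).trans ?_) k1m
    congr 2 <;> omega

theorem noFix (n2 : ∀ f, ((b * c) ^ 2) f ≠ f) (nab : ∀ f, (a * b) f ≠ f)
    (n3 : ∀ f, ((b * c) ^ 3) f ≠ f) (nac : ∀ f, (a * c) f ≠ f)
    {x : Equiv.Perm α} {j : ℤ} (hx : kLin a b c x j) {f : α} (hf : x f = f) : j % 6 = 0 := by
  have hinv : x⁻¹ f = f := by rw [Equiv.Perm.inv_eq_iff_eq]; exact hf.symm
  have hsq : (x * x) f = f := by simp [hf]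
  have hsqi : (x⁻¹ * x⁻¹) f = f := by rw [Equiv.Perm.mul_apply, hinv, hinv]
  have m := h.linmod hx (-(j / 6))
  have e : j + 6 * -(j / 6) = j % 6 := by omega
  rw [e] at m
  have : 0 ≤ j % 6 ∧ j % 6 < 6 := by omega
  generalize j % 6 = i at *
  obtain ⟨l, u⟩ := this
  interval_cases i
  · rfl
  · exact absurd hsq (h.noFix2 n2 nab (h.ll m m) f)
  · exact absurd hf (h.noFix2 n2 nab m f)
  · exact absurd hf (h.noFix3 n3 nac m f)
  · exact absurd hinv (h.noFix2 n2 nab (h.linmod (h.linv m) 1) f)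
  · exact absurd hsqi (h.noFix2 n2 nab (h.linmod (h.ll (h.linv m) (h.linv m)) 2) f)

theorem noFixR (nb : ∀ f, b f ≠ f) (na : ∀ f, a f ≠ f) (m : ℤ) :
    ∀ f, (kT a b c ^ (-m) * ((b * c) ^ 3 * c)) f ≠ f := by
  have hs : SemiconjBy ((b * c) ^ 3 * c) (kT a b c) (kT a b c)⁻¹ := by
    show _ = _
    rw [mul_assoc, h.cT, ← mul_assoc, h.r3T, mul_assoc]
  have hs' : ∀ l : ℤ, ((b * c) ^ 3 * c) * kT a b c ^ l = kT a b c ^ (-l) * ((b * c) ^ 3 * c) := by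
    intro l
    have := (hs.zpow_right l).eq
    rwa [inv_zpow'] at this
  have cj : ∀ l : ℤ, kT a b c ^ l * (kT a b c ^ (-m) * ((b * c) ^ 3 * c)) * (kT a b c ^ l)⁻¹
      = kT a b c ^ (2 * l - m) * ((b * c) ^ 3 * c) := by
    intro l
    rw [← zpow_neg, mul_assoc, mul_assoc (_ ^ (-m)), hs', ← mul_assoc, ← mul_assoc, ← zpow_add,
      ← zpow_add]
    congr 2; ring
  have k0 : ∀ f, ((b * c) ^ 3 * c) f ≠ f := by
    have e : (b * c)⁻¹ * ((b * c) ^ 3 * c) * (b * c)⁻¹⁻¹ = b := by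
      rw [inv_inv, mul_assoc, mul_assoc, h.cr]
      calc (b * c)⁻¹ * ((b * c) ^ 3 * ((b * c)⁻¹ * c)) = (b * c) * c := by
            generalize b * c = r; group
        _ = b := h.beq.symm
    exact kConj e nb
  have k1 : ∀ f, (kT a b c ^ (-1 : ℤ) * ((b * c) ^ 3 * c)) f ≠ f := by
    have e := h.aeq
    rw [zpow_neg_one, ← mul_assoc, ← e]
    exact na
  have hm : m % 2 = 0 ∨ m % 2 = 1 := by omega
  rcases hm with hm | hm
  · have := cj (m / 2)
    rw [(by omega : 2 * (m / 2) - m = 0), zpow_zero, one_mul] at this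
    exact kConj this k0
  · have := cj (m / 2)
    rw [(by omega : 2 * (m / 2) - m = -1)] at this
    exact kConj this k1
end KRel

section dihedral
variable {α : Type} {a b : Equiv.Perm α}

theorem kd_conj (hb : ∀ f, b (b f) = f) (ha : ∀ f, a (a f) = f) (j : ℤ) :
    b * (a * b) ^ j = (a * b) ^ (-j) * b := by
  have h1 : a⁻¹ = a := inv_eq_of_mul_eq_one_left (Equiv.ext ha)
  have h2 : b⁻¹ = b := inv_eq_of_mul_eq_one_left (Equiv.ext hb)
  have h : SemiconjBy b (a * b) (a * b)⁻¹ := by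
    show _ = _
    rw [mul_inv_rev, h1, h2, mul_assoc]
  have := (h.zpow_right j).eq
  rwa [inv_zpow'] at this

theorem kd_orbit (ha : ∀ f, a (a f) = f) (hb : ∀ f, b (b f) = f) (f g : α) :
    Quot.mk (fun f g => g = a f ∨ g = b f) f = Quot.mk (fun f g => g = a f ∨ g = b f) g ↔
      ∃ j : ℤ, g = ((a * b) ^ j) f ∨ g = ((a * b) ^ j) (b f) := by
  have cj := kd_conj hb ha
  have cj' : ∀ (j : ℤ) x, b (((a * b) ^ j) x) = ((a * b) ^ (-j)) (b x) := fun j x => by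
    have := congrArg (fun e => e x) (cj j); simpa using this
  have aj' : ∀ (j : ℤ) x, a (((a * b) ^ j) x) = ((a * b) ^ (1 - j)) (b x) := fun j x => by
    rw [sub_eq_add_neg, zpow_add, Equiv.Perm.mul_apply, ← cj', zpow_one, Equiv.Perm.mul_apply, hb]
  constructor
  · intro hq
    have hq := Quot.eqvGen_exact hq
    let P : α → Prop := fun g => ∃ j : ℤ, g = ((a * b) ^ j) f ∨ g = ((a * b) ^ j) (b f)
    have pa : ∀ g, P g → P (a g) := by
      rintro g ⟨j, rfl | rfl⟩
      · exact ⟨1 - j, Or.inr (aj' _ _)⟩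
      · exact ⟨1 - j, Or.inl (by rw [aj', hb])⟩
    have pb : ∀ g, P g → P (b g) := by
      rintro g ⟨j, rfl | rfl⟩
      · exact ⟨- j, Or.inr (cj' _ _)⟩
      · exact ⟨- j, Or.inl (by rw [cj', hb])⟩
    have key : ∀ x y, Relation.EqvGen (fun f g => g = a f ∨ g = b f) x y → (P x ↔ P y) := by
      intro x y hxy
      induction hxy with
      | rel x y e =>
        rcases e with rfl | rfl
        · exact ⟨pa x, fun t => by have := pa _ t; rwa [ha] at this⟩
        · exact ⟨pb x, fun t => by have := pb _ t; rwa [hb] at this⟩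
      | refl => rfl
      | symm _ _ _ ih => exact ih.symm
      | trans _ _ _ _ _ i1 i2 => exact i1.trans i2
    exact (key f g hq).1 ⟨0, Or.inl (by simp)⟩
  · have sa : ∀ x, Quot.mk (fun f g => g = a f ∨ g = b f) (a x) = Quot.mk _ x :=
      fun x => (Quot.sound (r := fun f g => g = a f ∨ g = b f) (Or.inl rfl)).symm
    have sb : ∀ x, Quot.mk (fun f g => g = a f ∨ g = b f) (b x) = Quot.mk _ x :=
      fun x => (Quot.sound (r := fun f g => g = a f ∨ g = b f) (Or.inr rfl)).symm
    have sr : ∀ (j : ℤ) x, Quot.mk (fun f g => g = a f ∨ g = b f) (((a * b) ^ j) x)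
        = Quot.mk _ x := by
      intro j
      induction j with
      | zero => intro x; simp
      | succ n ih => intro x; rw [zpow_add_one, Equiv.Perm.mul_apply, ih, Equiv.Perm.mul_apply, sa, sb]
      | pred n ih =>
        intro x
        rw [zpow_sub_one, Equiv.Perm.mul_apply, ih]
        have := sa (b ((a * b)⁻¹ x))
        rw [sb, ← Equiv.Perm.mul_apply, ← Equiv.Perm.mul_apply, mul_inv_cancel, Equiv.Perm.one_apply] at this
        exact this.symm
    rintro ⟨j, rfl | rfl⟩
    · exact (sr _ _).symm
    · rw [sr, sb]

theorem kd_card [Finite α] (ha : ∀ f, a (a f) = f) (hb : ∀ f, b (b f) = f)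
    (na : ∀ f, a f ≠ f) (nb : ∀ f, b f ≠ f) (f : α) :
    Nat.card {g // Quot.mk (fun f g => g = a f ∨ g = b f) f =
      Quot.mk (fun f g => g = a f ∨ g = b f) g} = 2 * Function.minimalPeriod (a * b) f := by
  have cj := kd_conj hb ha
  let O : Set α := MulAction.orbit (Subgroup.zpowers (a * b)) f
  have memO : ∀ g, g ∈ O ↔ ∃ j : ℤ, g = ((a * b) ^ j) f := by
    intro g
    constructor
    · rintro ⟨⟨_, j, rfl⟩, rfl⟩; exact ⟨j, rfl⟩
    · rintro ⟨j, rfl⟩; exact ⟨⟨_, j, rfl⟩, rfl⟩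
  have hO : O.ncard = Function.minimalPeriod (a * b) f := by
    have := Fintype.ofFinite O
    have e := MulAction.minimalPeriod_eq_card (a := a * b) (b := f)
    rw [← Nat.card_coe_set_eq, Nat.card_eq_fintype_card]
    rw [show Function.minimalPeriod (a * b) f = Function.minimalPeriod ((a * b) • ·) f from rfl, e]
  have hset : {g | Quot.mk (fun f g => g = a f ∨ g = b f) f =
      Quot.mk (fun f g => g = a f ∨ g = b f) g} = O ∪ b '' O := by
    ext g
    rw [Set.mem_ofPred_eq, kd_orbit ha hb, Set.mem_union, Set.mem_image]
    constructor
    · rintro ⟨j, e | e⟩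
      · exact Or.inl ((memO _).2 ⟨j, e⟩)
      · refine Or.inr ⟨((a * b) ^ (-j)) f, (memO _).2 ⟨_, rfl⟩, ?_⟩
        rw [e, ← Equiv.Perm.mul_apply, cj]; simp
    · rintro (e | ⟨x, hx, rfl⟩)
      · obtain ⟨j, e⟩ := (memO _).1 e
        exact ⟨j, Or.inl e⟩
      · obtain ⟨j, rfl⟩ := (memO _).1 hx
        refine ⟨-j, Or.inr ?_⟩
        rw [← Equiv.Perm.mul_apply, cj]; simp
  have nofix : ∀ (j : ℤ) x, (b * (a * b) ^ j) x ≠ x := by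
    intro j
    have hj : j % 2 = 0 ∨ j % 2 = 1 := by omega
    have e0 : ∀ l : ℤ, (a * b) ^ l * (b * (a * b) ^ j) * ((a * b) ^ l)⁻¹
        = b * (a * b) ^ (j - 2 * l) := by
      intro l
      have := cj (-l)
      rw [neg_neg] at this
      rw [← mul_assoc, ← this, ← zpow_neg, mul_assoc, mul_assoc, ← zpow_add, ← zpow_add]
      congr 2; ring
    rcases hj with hj | hj
    · refine kConj (e0 (j / 2)) ?_
      rw [(by omega : j - 2 * (j / 2) = 0)]; simpa using nb
    · refine kConj (e0 (j / 2)) ?_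
      rw [(by omega : j - 2 * (j / 2) = 1)]
      intro x hx
      simp only [zpow_one, Equiv.Perm.mul_apply] at hx
      apply na (b x)
      have := congrArg b hx
      rwa [hb] at this
  have hdisj : Disjoint O (b '' O) := by
    rw [Set.disjoint_left]
    rintro x hx ⟨y, hy, rfl⟩
    obtain ⟨i, hi⟩ := (memO _).1 hx
    obtain ⟨j, rfl⟩ := (memO _).1 hy
    apply nofix (i + j) f
    rw [add_comm, zpow_add, ← mul_assoc, cj, Equiv.Perm.mul_apply, Equiv.Perm.mul_apply, ← hi, hb,
      ← Equiv.Perm.mul_apply, ← zpow_add]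
    simp
  rw [show Nat.card {g // Quot.mk (fun f g => g = a f ∨ g = b f) f =
      Quot.mk (fun f g => g = a f ∨ g = b f) g} = Set.ncard {g | Quot.mk (fun f g => g = a f ∨ g = b f) f =
      Quot.mk (fun f g => g = a f ∨ g = b f) g} from rfl, hset, Set.ncard_union_eq hdisj,
      Set.ncard_image_of_injective _ b.injective, hO, two_mul]
end dihedral

namespace PreMap
variable (M : PreMap)

theorem k_period6 (hM : M.IsClosedSurfaceMap) (h6 : M.HasVertexType [3, 3, 3, 3, 3, 3])
    (f : M.flag) : Function.minimalPeriod (M.s1 * M.s2) f = 6 := by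
  obtain ⟨-, h0, h1, h2, n0, n1, n2, -⟩ := hM
  obtain ⟨g, hg, hd, -⟩ := h6 f
  have hfd : M.vertexDeg f = M.vertexDeg g := by
    unfold vertexDeg SameVertex
    unfold SameVertex at hg
    rw [hg]
  have e : M.vertexDeg f = (2 * Function.minimalPeriod (M.s1 * M.s2) f) / 2 :=
    congrArg (· / 2) (kd_card h1 h2 n1 n2 f)
  rw [hfd, hd] at e
  simp at e
  exact e.symm

theorem k_r6 (hM : M.IsClosedSurfaceMap) (h6 : M.HasVertexType [3, 3, 3, 3, 3, 3]) :
    (M.s1 * M.s2) ^ 6 = 1 := by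
  ext f
  have := Function.iterate_minimalPeriod (f := (M.s1 * M.s2)) (x := f)
  rw [M.k_period6 hM h6, Equiv.Perm.iterate_eq_pow] at this
  exact this

theorem k_period3 (hM : M.IsClosedSurfaceMap) (h6 : M.HasVertexType [3, 3, 3, 3, 3, 3])
    (f : M.flag) : Function.minimalPeriod (M.s0 * M.s1) f = 3 := by
  have r6 := M.k_r6 hM h6
  obtain ⟨-, h0, h1, h2, n0, n1, n2, -⟩ := hM
  obtain ⟨g, hg, -, hd⟩ := h6 f
  have hp : ∀ j : ℤ, M.faceDeg (((M.s1 * M.s2) ^ j) g) = 3 := by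
    intro j
    have e : ((M.s1 * M.s2) ^ j) = (M.s1 * M.s2) ^ (j % 6).toNat := by
      have : j = ((j % 6).toNat : ℤ) + 6 * (j / 6) := by omega
      conv_lhs => rw [this]
      rw [zpow_add, zpow_mul, zpow_ofNat, r6, one_zpow, mul_one, zpow_natCast]
    rw [e]
    have hlt : (j % 6).toNat < 6 := by omega
    have := hd ⟨(j % 6).toNat, hlt⟩
    rw [this]
    generalize (j % 6).toNat = i at hlt
    interval_cases i <;> rfl
  have hs : ∀ x, M.faceDeg (M.s1 x) = M.faceDeg x := by
    intro x
    have e : M.faceOfFlag x = M.faceOfFlag (M.s1 x) := Quot.sound (Or.inr rfl)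
    unfold faceDeg SameFace
    rw [e]
  have hfd : M.faceDeg f = 3 := by
    obtain ⟨j, e | e⟩ := (kd_orbit h1 h2 g f).1 hg.symm
    · rw [e]; exact hp j
    · have cj := kd_conj h2 h1 (-j)
      rw [neg_neg] at cj
      have e' : f = M.s2 (((M.s1 * M.s2) ^ (-j)) g) := by
        rw [e, ← Equiv.Perm.mul_apply, ← Equiv.Perm.mul_apply, cj]
      have e2 : f = M.s1 (((M.s1 * M.s2) ^ (1 + -j)) g) := by
        rw [e', zpow_add, zpow_one, Equiv.Perm.mul_apply, Equiv.Perm.mul_apply, h1]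
      rw [e2, hs]; exact hp _
  have e : M.faceDeg f = (2 * Function.minimalPeriod (M.s0 * M.s1) f) / 2 :=
    congrArg (· / 2) (kd_card h0 h1 n0 n1 f)
  rw [hfd] at e
  omega

theorem k_rel (hM : M.IsClosedSurfaceMap) (h6 : M.HasVertexType [3, 3, 3, 3, 3, 3]) :
    KRel M.s0 M.s1 M.s2 where
  ha := Equiv.ext hM.2.1
  hb := Equiv.ext hM.2.2.1
  hc := Equiv.ext hM.2.2.2.1
  hac := Equiv.ext hM.2.2.2.2.2.2.2.1
  h3 := by
    ext f
    have := Function.iterate_minimalPeriod (f := (M.s0 * M.s1)) (x := f)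
    rw [M.k_period3 hM h6, Equiv.Perm.iterate_eq_pow] at this
    exact this
  hr := M.k_r6 hM h6

theorem k_nofix (hM : M.IsClosedSurfaceMap) (h6 : M.HasVertexType [3, 3, 3, 3, 3, 3])
    {x : Equiv.Perm M.flag} {j : ℤ} (hx : kLin M.s0 M.s1 M.s2 x j) {f : M.flag} (hf : x f = f) :
    j % 6 = 0 := by
  refine (M.k_rel hM h6).noFix ?_ ?_ ?_ ?_ hx hf
  · intro f hf
    have : Function.IsPeriodicPt (M.s1 * M.s2) 2 f := by
      unfold Function.IsPeriodicPt Function.IsFixedPt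
      rw [Equiv.Perm.iterate_eq_pow]; exact hf
    have := this.minimalPeriod_dvd
    rw [M.k_period6 hM h6] at this
    omega
  · intro f hf
    have : Function.IsPeriodicPt (M.s0 * M.s1) 1 f := by
      unfold Function.IsPeriodicPt Function.IsFixedPt
      rw [Equiv.Perm.iterate_eq_pow, pow_one]; exact hf
    have := this.minimalPeriod_dvd
    rw [M.k_period3 hM h6] at this
    omega
  · intro f hf
    have : Function.IsPeriodicPt (M.s1 * M.s2) 3 f := by
      unfold Function.IsPeriodicPt Function.IsFixedPt
      rw [Equiv.Perm.iterate_eq_pow]; exact hf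
    have := this.minimalPeriod_dvd
    rw [M.k_period6 hM h6] at this
    omega
  · exact hM.2.2.2.2.2.2.2.2.1

theorem k_glide (hM : M.IsClosedSurfaceMap) (h : KRel M.s0 M.s1 M.s2) (ho : ¬ M.Orientable)
    (f0 : M.flag) : ∃ u j, kRef M.s0 M.s1 M.s2 u j ∧ u f0 = f0 := by
  classical
  by_contra hno
  push Not at hno
  apply ho
  let L : M.flag → Prop := fun g => ∃ x j, kLin M.s0 M.s1 M.s2 x j ∧ x f0 = g
  let R : M.flag → Prop := fun g => ∃ x j, kRef M.s0 M.s1 M.s2 x j ∧ x f0 = g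
  have LR : ∀ σ k, kRef M.s0 M.s1 M.s2 σ k → ∀ g, L g → R (σ g) := by
    rintro σ k hσ g ⟨x, j, hx, rfl⟩
    exact ⟨σ * x, _, h.rl hσ hx, rfl⟩
  have RL : ∀ σ k, kRef M.s0 M.s1 M.s2 σ k → ∀ g, R g → L (σ g) := by
    rintro σ k hσ g ⟨x, j, hx, rfl⟩
    exact ⟨σ * x, _, h.rr hσ hx, rfl⟩
  have hnot : ∀ g, L g → R g → False := by
    rintro g ⟨x, j, hx, rfl⟩ ⟨y, k, hy, e⟩
    apply hno _ _ (h.lr (h.linv hx) hy)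
    rw [Equiv.Perm.mul_apply, e]; simp
  have step : ∀ σ k, kRef M.s0 M.s1 M.s2 σ k → ∀ g, (L g ∨ R g) → (L (σ g) ∨ R (σ g)) := by
    rintro σ k hσ g (hg | hg)
    · exact Or.inr (LR σ k hσ g hg)
    · exact Or.inl (RL σ k hσ g hg)
  obtain ⟨-, h0, h1, h2, -, -, -, -, -, hc⟩ := hM
  have key : ∀ x y, Relation.EqvGen (fun a b => b = M.s0 a ∨ b = M.s1 a ∨ b = M.s2 a) x y →
      ((L x ∨ R x) ↔ (L y ∨ R y)) := by
    intro x y hxy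
    induction hxy with
    | rel x y e =>
      rcases e with rfl | rfl | rfl
      · exact ⟨step _ _ h.refa x, fun t => by have := step _ _ h.refa _ t; rwa [h0] at this⟩
      · exact ⟨step _ _ h.refb x, fun t => by have := step _ _ h.refb _ t; rwa [h1] at this⟩
      · exact ⟨step _ _ h.refc x, fun t => by have := step _ _ h.refc _ t; rwa [h2] at this⟩
    | refl => rfl
    | symm _ _ _ ih => exact ih.symm
    | trans _ _ _ _ _ i1 i2 => exact i1.trans i2
  have hall : ∀ g, L g ∨ R g := fun g =>
    (key f0 g (hc f0 g)).1 (Or.inl ⟨1, 0, by simpa using h.linr 0, rfl⟩)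
  have flip : ∀ σ k, kRef M.s0 M.s1 M.s2 σ k → ∀ g, decide (L (σ g)) ≠ decide (L g) := by
    intro σ k hσ g he
    rw [decide_eq_decide] at he
    rcases hall g with hg | hg
    · exact hnot _ (he.2 hg) (LR σ k hσ g hg)
    · exact hnot _ (he.1 (RL σ k hσ g hg)) hg
  exact ⟨fun g => decide (L g), flip _ _ h.refa, flip _ _ h.refb, fun g _ => flip _ _ h.refc g⟩

theorem k_main (hM : M.IsClosedSurfaceMap) (h6 : M.HasVertexType [3, 3, 3, 3, 3, 3])
    (ho : ¬ M.Orientable) : ∃ (k : ℕ) (f : M.flag), M.IsCycleTypeA k f := by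
  classical
  have h := M.k_rel hM h6
  obtain ⟨f0⟩ := hM.1
  obtain ⟨f, u, j, hu, huf, hj⟩ : ∃ f u j, kRef M.s0 M.s1 M.s2 u j ∧ u f = f ∧ (j = 0 ∨ j = 3) := by
    obtain ⟨u, j, hu, hf⟩ := M.k_glide hM h ho f0
    obtain ⟨l, hl⟩ : ∃ l : ℤ, l + j - -l = 0 ∨ l + j - -l = 3 := by
      rcases (by omega : j % 2 = 0 ∨ j % 2 = 1) with e | e
      · exact ⟨-(j / 2), by omega⟩
      · exact ⟨1 - j / 2, by omega⟩
    refine ⟨((M.s1 * M.s2) ^ l) f0, (M.s1 * M.s2) ^ l * u * (M.s1 * M.s2) ^ (-l), _,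
      h.rl (h.lr (h.linr l) hu) (h.linr (-l)), ?_, hl⟩
    rw [← Equiv.Perm.mul_apply, mul_assoc, ← zpow_add, neg_add_cancel, zpow_zero, mul_one,
      Equiv.Perm.mul_apply, hf]
  set T := kT M.s0 M.s1 M.s2 with hT
  have hcT : Commute M.s2 T := h.cT
  have hstep : M.stepA = M.s2 * T := by
    rw [hT, kT, ← mul_assoc, h.hc, one_mul]; rfl
  have hpow : ∀ i : ℕ, M.stepA ^ i = T ^ i ∨ M.stepA ^ i = M.s2 * T ^ i := by
    intro i
    rw [hstep, hcT.mul_pow]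
    rcases Nat.even_or_odd' i with ⟨m, e | e⟩
    · left; nth_rw 1 [e]; rw [pow_mul, pow_two, h.hc, one_pow, one_mul]
    · right; nth_rw 1 [e]; rw [pow_succ, pow_mul, pow_two, h.hc, one_pow, one_mul]
  have hex : ∃ k : ℕ, 1 ≤ k ∧ ((T ^ k) f = f ∨ (T ^ k) f = M.s2 f) :=
    ⟨orderOf T, orderOf_pos T, Or.inl (by rw [pow_orderOf_eq_one]; rfl)⟩
  have hmin := fun m => Nat.find_min (m := m) hex
  obtain ⟨hk1, hk⟩ := Nat.find_spec hex
  set k := Nat.find hex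
  have hc2 := hM.2.2.2.1
  have hvv : ∀ i : ℕ, M.vertexOfFlag ((M.stepA ^ i) f) = M.vertexOfFlag ((T ^ i) f) := by
    intro i
    rcases hpow i with e | e
    · rw [e]
    · rw [e]; exact (Quot.sound (r := M.vRel) (Or.inr rfl)).symm
  have main : ∀ i j : ℕ, i < j → j < k →
      M.vertexOfFlag ((T ^ i) f) = M.vertexOfFlag ((T ^ j) f) → False := by
    intro i m him hmk hv
    have hnot : ¬ ((T ^ (m - i)) f = f ∨ (T ^ (m - i)) f = M.s2 f) := fun t =>
      hmin (m - i) (by omega) ⟨by omega, t⟩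
    have hsub : T ^ m = T ^ i * T ^ (m - i) := by rw [← pow_add]; congr 1; omega
    obtain ⟨l, e | e⟩ := (kd_orbit hM.2.2.1 hM.2.2.2.1 _ _).1 hv
    · have hx := h.ll (h.ll (h.linT (-(m : ℤ))) (h.linr l)) (h.linT (i : ℤ))
      have hl := M.k_nofix hM h6 hx (f := f) (by
        rw [Equiv.Perm.mul_apply, Equiv.Perm.mul_apply, ← hT, zpow_natCast, ← e,
          ← Equiv.Perm.mul_apply, zpow_neg, zpow_natCast, inv_mul_cancel]; rfl)
      have : (M.s1 * M.s2) ^ l = 1 := by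
        have := h.rmod 0 (l / 6)
        rw [(by omega : 0 + 6 * (l / 6) = l), zpow_zero] at this
        exact this
      rw [this, hsub] at e
      exact hnot (Or.inl ((T ^ i).injective e))
    · have hx := h.rl (h.lr (h.ll (h.linT (-(m : ℤ))) (h.linr l)) h.refc) (h.linT (i : ℤ))
      have hfix : (T ^ (-(m : ℤ)) * (M.s1 * M.s2) ^ l * M.s2 * T ^ (i : ℤ)) f = f := by
        rw [Equiv.Perm.mul_apply, Equiv.Perm.mul_apply, Equiv.Perm.mul_apply, zpow_natCast, ← e,
          ← Equiv.Perm.mul_apply, zpow_neg, zpow_natCast, inv_mul_cancel]; rfl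
      have hl := M.k_nofix hM h6 (h.rr hx hu) (f := f) (by
        rw [Equiv.Perm.mul_apply, huf]; exact hfix)
      have hl' : l % 6 = 0 ∨ l % 6 = 3 := by omega
      rcases hl' with hl' | hl'
      · have : (M.s1 * M.s2) ^ l = 1 := by
          have := h.rmod 0 (l / 6)
          rw [(by omega : 0 + 6 * (l / 6) = l), zpow_zero] at this
          exact this
        rw [this, hsub] at e
        refine hnot (Or.inr ((T ^ i).injective ?_))
        have e' := (hcT.pow_right i).eq
        rw [← Equiv.Perm.mul_apply, e, ← Equiv.Perm.mul_apply (T ^ i) M.s2, ← e']; rfl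
      · have this : (M.s1 * M.s2) ^ l = (M.s1 * M.s2) ^ 3 := by
          have := h.rmod 3 (l / 6)
          rw [(by omega : 3 + 6 * (l / 6) = l)] at this
          rw [this, zpow_ofNat]
        have hs : SemiconjBy ((M.s1 * M.s2) ^ 3 * M.s2) T T⁻¹ := by
          show _ = _
          rw [mul_assoc, hcT.eq, ← mul_assoc, h.r3T, mul_assoc]
        have hs' := (hs.zpow_right (i : ℤ)).eq
        rw [inv_zpow'] at hs'
        rw [this, mul_assoc _ _ M.s2, mul_assoc, hs', ← mul_assoc, ← zpow_add,
          (by ring : -(m : ℤ) + -(i : ℤ) = -((m : ℤ) + i))] at hfix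
        exact h.noFixR hM.2.2.2.2.2.1 hM.2.2.2.2.1 _ f hfix
  refine ⟨k, f, hk1, ?_, ?_⟩
  · rcases hpow k with e | e
    · rw [e]; exact hk
    · rw [e, Equiv.Perm.mul_apply]
      rcases hk with e' | e'
      · right; rw [e']
      · left; rw [e', hc2]
  · intro i j hij
    unfold SameVertex at hij
    rw [hvv, hvv] at hij
    rcases lt_trichotomy i j with hlt | heq | hlt
    · exact (main i j hlt j.2 hij).elim
    · exact heq
    · exact (main j i hlt i.2 hij.symm).elim
end PreMap

/-- Every semi-equivelar map `M` of type `{3^6}` on the Klein bottle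
contains a cycle of type `A`. -/
theorem klein_36_cycleA_exists (M : PreMap) (hM : M.IsKleinBottleMap)
    (h6 : M.HasVertexType [3, 3, 3, 3, 3, 3]) :
    ∃ (k : ℕ) (f : M.flag), M.IsCycleTypeA k f := by
  exact M.k_main hM.1 h6 hM.2.2.2
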